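/- Fix t > 0, ξ > 0, y₀ > 0 and p > 1, and set η := 1/(2(p-1)) and χ(τ,p) := τ^{2p}·exp(-y₀^{2(1-p)}/(2ξ²t(1-p)²)) / ((p-1)ξ²t·Γ(1+η)·(2(1-p)²ξ²t)^η). Then for every k > 0 and every τ ∈ (0,1): | C(k,τ)·τ/(χ(τ,p)·J^{2p}(k)) - 1 | ≤ exp(y₀^{2-2p}/(2(p-1)²tξ²)) · ( J^{4p-2}(k)/(2ξ²t(1-p)²·J^{2p}(k)) + J^{3p-1}(k)/(ξ²t(1-p)²·y₀^{p-1}·J^{2p}(k)) ) · τ^{p-1}. In particular C(k,τ) = τ^{-1}·χ(τ,p)·J^{2p}(k)·(1 + O(τ^{p-1})) as τ → 0⁺. -/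

import Mathlib

/-- The standard normal cumulative distribution function. -/
noncomputable def Phi (x : ℝ) : ℝ :=
  ∫ s in Set.Iic x, Real.exp (-(s ^ 2) / 2) / Real.sqrt (2 * Real.pi)

/-- The Black–Scholes call price. -/
noncomputable def BS (k w T : ℝ) : ℝ :=
  Phi (-k / Real.sqrt (w * T) + Real.sqrt (w * T) / 2)
    - Real.exp k * Phi (-k / Real.sqrt (w * T) - Real.sqrt (w * T) / 2)

/-- The modified Bessel function of the first kind of order `ν`. -/
noncomputable def besselI (ν x : ℝ) : ℝ :=
  ∑' m : ℕ, (x / 2) ^ (2 * (m : ℝ) + ν) / ((m.factorial : ℝ) * Real.Gamma ((m : ℝ) + ν + 1))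

/-! On `(0, ∞)` the CEV density is `K * z ^ (-(2 * p)) * exp (-u z) * Λ (x z)`, where `u z` is
proportional to `z ^ (2 * (1 - p))`, `x z` to `z ^ (1 - p)`, and `Λ` is the Bessel function
normalized at `0`. Comparing power series gives `1 ≤ Λ ≤ cosh`, and AM-GM gives `x ≤ u + b` for a
constant `b`, so that `|exp (-u) * Λ x - 1| ≤ exp b * (u + x)` for every `z > 0`. Integrated against
the call price, the leading term and the two errors become moments of `w ↦ BS k w τ`, and the
substitution `w ↦ w * τ` turns the moment of order `q` into `τ ^ (q - 1)` times the one at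
maturity `1`. -/

open MeasureTheory ProbabilityTheory Set

lemma setIntegral_pos_of_forall_pos {α : Type*} [MeasurableSpace α] {μ : Measure α} {s : Set α}
    {f : α → ℝ} (hs : MeasurableSet s) (hμ : 0 < μ s) (hf : IntegrableOn f s μ)
    (hpos : ∀ x ∈ s, 0 < f x) : 0 < ∫ x in s, f x ∂μ := by
  have hsupp : s ⊆ Function.support f := fun x hx => (hpos x hx).ne'
  rwa [setIntegral_pos_iff_support_of_nonneg_ae
    (ae_restrict_of_forall_mem hs fun x hx => (hpos x hx).le) hf,
    inter_eq_self_of_subset_right hsupp]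

lemma abs_integral_sub_integral_le {α : Type*} [MeasurableSpace α] {μ : Measure α}
    {f g b : α → ℝ} (hf : AEStronglyMeasurable f μ) (hg : Integrable g μ) (hb : Integrable b μ)
    (h : ∀ᵐ x ∂μ, |f x - g x| ≤ b x) : |∫ x, f x ∂μ - ∫ x, g x ∂μ| ≤ ∫ x, b x ∂μ := by
  have hfg : Integrable (f - g) μ := hb.mono' (hf.sub hg.aestronglyMeasurable) h
  have hf' : Integrable f μ := by simpa using hfg.add hg
  rw [← integral_sub hf' hg]
  exact norm_integral_le_of_norm_le (f := fun x => f x - g x) hb h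

lemma integrableOn_exp_neg_div_mul_rpow_neg {b q : ℝ} (hb : 0 < b) (hq : 1 < q) :
    IntegrableOn (fun x : ℝ => Real.exp (-(b / x)) * x ^ (-q)) (Ioi 0) := by
  have hgamma : IntegrableOn (fun x : ℝ => x ^ (q - 2) * Real.exp (-b * x)) (Ioi 0) := by
    simpa only [Real.rpow_one] using
      integrableOn_rpow_mul_exp_neg_mul_rpow (s := q - 2) (by linarith) one_pos hb
  refine ((integrableOn_Ioi_comp_rpow_iff' _ (by norm_num : (-1 : ℝ) ≠ 0)).2 hgamma).congr_fun
    (fun x (hx : 0 < x) => ?_) measurableSet_Ioi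
  simp only [smul_eq_mul]
  rw [← Real.rpow_mul hx.le, ← mul_assoc, ← Real.rpow_add hx, Real.rpow_neg_one, mul_comm]
  congr 2 <;> ring

section BlackScholes

lemma Phi_eq_setIntegral_gaussianPDFReal (x : ℝ) :
    Phi x = ∫ s in Iic x, gaussianPDFReal 0 1 s := by
  simp [Phi, gaussianPDFReal_def, div_eq_inv_mul]

lemma Phi_eq_gaussianReal (x : ℝ) : Phi x = (gaussianReal 0 1).real (Iic x) := by
  rw [Phi_eq_setIntegral_gaussianPDFReal, measureReal_def,
    gaussianReal_apply_eq_integral 0 one_ne_zero, ENNReal.toReal_ofReal]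
  exact integral_nonneg (gaussianPDFReal_nonneg 0 1)

lemma Phi_nonneg (x : ℝ) : 0 ≤ Phi x := by
  rw [Phi_eq_gaussianReal]
  exact measureReal_nonneg

lemma monotone_Phi : Monotone Phi := fun a b hab => by
  rw [Phi_eq_gaussianReal, Phi_eq_gaussianReal]
  exact measureReal_mono (Iic_subset_Iic.2 hab)

lemma Phi_le_exp {l : ℝ} (hl : 0 ≤ l) (x : ℝ) : Phi x ≤ Real.exp (l * x + l ^ 2 / 2) := by
  have hchernoff := measure_le_le_exp_mul_mgf (μ := gaussianReal 0 1) (X := id) x (neg_nonpos.2 hl)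
    (integrable_exp_mul_gaussianReal (-l))
  rw [mgf_id_gaussianReal, ← Real.exp_add] at hchernoff
  simpa [Phi_eq_gaussianReal, Iic] using hchernoff

lemma Phi_add (x a : ℝ) : Phi (x + a) = ∫ s in Iic x, gaussianPDFReal 0 1 (s + a) := by
  rw [Phi_eq_setIntegral_gaussianPDFReal,
    ← (measurePreserving_add_right volume a).setIntegral_preimage_emb
      (measurableEmbedding_addRight a)]
  simp

lemma exp_mul_gaussianPDFReal_lt {k a s : ℝ} (h : a * s < -k - a ^ 2 / 2) :
    Real.exp k * gaussianPDFReal 0 1 s < gaussianPDFReal 0 1 (s + a) := by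
  simp only [gaussianPDFReal_def, mul_left_comm (Real.exp k), ← Real.exp_add]
  gcongr
  norm_num
  nlinarith

lemma BS_pos (k : ℝ) {w T : ℝ} (hwT : 0 < w * T) : 0 < BS k w T := by
  set a := √(w * T) with ha_def
  have ha : 0 < a := Real.sqrt_pos.2 hwT
  set d := -k / a - a / 2 with hd
  have hpdf : Integrable (gaussianPDFReal 0 1) := integrable_gaussianPDFReal 0 1
  have hshift : Integrable fun s => gaussianPDFReal 0 1 (s + a) := hpdf.comp_add_right a
  have hBS : BS k w T =
      ∫ s in Iio d, (gaussianPDFReal 0 1 (s + a) - Real.exp k * gaussianPDFReal 0 1 s) := by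
    rw [BS, ← ha_def, ← hd, show -k / a + a / 2 = d + a by rw [hd]; ring, Phi_add,
      Phi_eq_setIntegral_gaussianPDFReal, ← integral_Iic_eq_integral_Iio,
      integral_sub hshift.integrableOn (hpdf.const_mul _).integrableOn, integral_const_mul]
  rw [hBS]
  refine setIntegral_pos_of_forall_pos measurableSet_Iio (by simp)
    (hshift.sub (hpdf.const_mul _)).integrableOn fun s (hs : s < d) => sub_pos.2 ?_
  apply exp_mul_gaussianPDFReal_lt
  calc a * s < a * d := by gcongr
    _ = -k - a ^ 2 / 2 := by rw [hd]; field_simp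

-- The Chernoff bound for `Phi` at the exponent `k / √(w * T)`.
lemma BS_le_exp {k w T : ℝ} (hk : 0 ≤ k) (hwT : 0 < w * T) :
    BS k w T ≤ Real.exp (k / 2) * Real.exp (-(k ^ 2 / (2 * T) / w)) := by
  set a := √(w * T)
  have ha : 0 < a := Real.sqrt_pos.2 hwT
  have ha2 : a ^ 2 = w * T := Real.sq_sqrt hwT.le
  have hput := mul_nonneg (Real.exp_nonneg k) (Phi_nonneg (-k / a - a / 2))
  calc BS k w T ≤ Phi (-k / a + a / 2) := by rw [BS]; linarith
    _ ≤ Real.exp (k / a * (-k / a + a / 2) + (k / a) ^ 2 / 2) := Phi_le_exp (by positivity) _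
    _ = Real.exp (k / 2) * Real.exp (-(k ^ 2 / (2 * T) / w)) := by
      rw [← Real.exp_add, div_div, mul_assoc, mul_comm T, ← ha2]
      congr 1
      field_simp
      ring

lemma measurable_BS (k T : ℝ) : Measurable fun w => BS k w T := by
  unfold BS
  refine (monotone_Phi.measurable.comp ?_).sub ((monotone_Phi.measurable.comp ?_).const_mul _) <;>
    fun_prop

lemma BS_eq_BS_mul_one (k w T : ℝ) : BS k w T = BS k (w * T) 1 := by
  rw [BS, BS, mul_one]

lemma integrableOn_BS_mul_rpow_neg {k T q : ℝ} (hk : 0 < k) (hT : 0 < T) (hq : 1 < q) :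
    IntegrableOn (fun w => BS k w T * w ^ (-q)) (Ioi 0) := by
  have hdom := (integrableOn_exp_neg_div_mul_rpow_neg (b := k ^ 2 / (2 * T)) (by positivity)
    hq).const_mul (Real.exp (k / 2))
  refine hdom.mono' ((measurable_BS k T).mul (by fun_prop)).aestronglyMeasurable
    (ae_restrict_of_forall_mem measurableSet_Ioi fun w (hw : 0 < w) => ?_)
  have hBS := BS_pos k (mul_pos hw hT)
  rw [Real.norm_of_nonneg (by positivity), ← mul_assoc]
  gcongr
  exact BS_le_exp hk.le (mul_pos hw hT)

/-- The maturity-independent integral `J^q(k)`. -/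
noncomputable def bsMoment (k q : ℝ) : ℝ :=
  ∫ w in Ioi (0 : ℝ), BS k w 1 * w ^ (-q)

lemma bsMoment_pos {k q : ℝ} (hk : 0 < k) (hq : 1 < q) : 0 < bsMoment k q :=
  setIntegral_pos_of_forall_pos measurableSet_Ioi (by simp)
    (integrableOn_BS_mul_rpow_neg hk one_pos hq) fun w (hw : 0 < w) =>
      mul_pos (BS_pos k (by simpa using hw)) (Real.rpow_pos_of_pos hw _)

lemma integral_BS_mul_rpow_neg (k q : ℝ) {T : ℝ} (hT : 0 < T) :
    ∫ w in Ioi (0 : ℝ), BS k w T * w ^ (-q) = T ^ (q - 1) * bsMoment k q := by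
  have hscale : ∀ w ∈ Ioi (0 : ℝ),
      BS k w T * w ^ (-q) = T ^ q * (BS k (w * T) 1 * (w * T) ^ (-q)) := fun w hw => by
    rw [BS_eq_BS_mul_one k w, Real.mul_rpow (le_of_lt hw) hT.le, Real.rpow_neg hT.le]
    field_simp
  rw [setIntegral_congr_fun measurableSet_Ioi hscale, integral_const_mul,
    integral_comp_mul_right_Ioi (fun w => BS k w 1 * w ^ (-q)) 0 hT, zero_mul, smul_eq_mul,
    ← mul_assoc, Real.rpow_sub_one hT.ne', bsMoment, div_eq_mul_inv]

end BlackScholes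

section Bessel

/-- The modified Bessel function normalized to take the value `1` at `0`, that is
`Γ(1 + ν) (x / 2) ^ (-ν) I_ν(x)` for `x > 0`; as a power series it makes sense for all real `x`. -/
noncomputable def normalizedBesselI (ν x : ℝ) : ℝ :=
  ∑' m : ℕ, Real.Gamma (1 + ν) * (x / 2) ^ (2 * m) / (m.factorial * Real.Gamma (m + ν + 1))

lemma besselI_eq_mul_normalizedBesselI {ν x : ℝ} (hν : -1 < ν) (hx : 0 < x) :
    besselI ν x = (x / 2) ^ ν / Real.Gamma (1 + ν) * normalizedBesselI ν x := by
  have hΓ : Real.Gamma (1 + ν) ≠ 0 := (Real.Gamma_pos_of_pos (by linarith)).ne'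
  rw [besselI, normalizedBesselI, ← tsum_mul_left]
  congr 1 with m
  rw [Real.rpow_add (by positivity), ← Nat.cast_ofNat, ← Nat.cast_mul, Real.rpow_natCast]
  field_simp

-- For `ν = -1/2` this is an equality, and `normalizedBesselI ν` is `cosh`.
lemma factorial_two_mul_mul_Gamma_le {ν : ℝ} (hν : -(1 / 2) ≤ ν) (m : ℕ) :
    ((2 * m).factorial : ℝ) * Real.Gamma (1 + ν)
      ≤ 4 ^ m * (m.factorial * Real.Gamma (m + ν + 1)) := by
  induction m with
  | zero => simp [add_comm]
  | succ n ih =>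
    have hΓ₁ : 0 < Real.Gamma (1 + ν) := Real.Gamma_pos_of_pos (by linarith)
    have hΓ_succ : Real.Gamma ((n + 1 : ℕ) + ν + 1) = (n + ν + 1) * Real.Gamma (n + ν + 1) := by
      rw [← Real.Gamma_add_one (by linarith)]
      push_cast
      ring_nf
    have hfactorial :
        ((2 * (n + 1)).factorial : ℝ) = (2 * n + 2) * (2 * n + 1) * (2 * n).factorial := by
      rw [show 2 * (n + 1) = 2 * n + 1 + 1 by ring, Nat.factorial_succ, Nat.factorial_succ]
      push_cast
      ring
    calc ((2 * (n + 1)).factorial : ℝ) * Real.Gamma (1 + ν)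
        = (2 * n + 2) * (2 * n + 1) * ((2 * n).factorial * Real.Gamma (1 + ν)) := by
          rw [hfactorial, mul_assoc]
      _ ≤ (2 * n + 2) * (2 * (n + ν + 1))
            * (4 ^ n * (n.factorial * Real.Gamma (n + ν + 1))) := by
          refine mul_le_mul ?_ ih (mul_nonneg (by positivity) hΓ₁.le) (by nlinarith)
          gcongr
          linarith
      _ = 4 ^ (n + 1) * ((n + 1).factorial * Real.Gamma ((n + 1 : ℕ) + ν + 1)) := by
          rw [hΓ_succ, Nat.factorial_succ]
          push_cast
          ring

lemma normalizedBesselI_term_nonneg {ν : ℝ} (hν : -1 < ν) (x : ℝ) (m : ℕ) :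
    0 ≤ Real.Gamma (1 + ν) * (x / 2) ^ (2 * m) / (m.factorial * Real.Gamma (m + ν + 1)) := by
  have hΓ : 0 < Real.Gamma (1 + ν) := Real.Gamma_pos_of_pos (by linarith)
  have hΓm : 0 < Real.Gamma (m + ν + 1) := Real.Gamma_pos_of_pos (by linarith)
  have hpow : 0 ≤ (x / 2) ^ (2 * m) := (even_two_mul m).pow_nonneg _
  positivity

lemma normalizedBesselI_term_le {ν : ℝ} (hν : -(1 / 2) ≤ ν) (x : ℝ) (m : ℕ) :
    Real.Gamma (1 + ν) * (x / 2) ^ (2 * m) / (m.factorial * Real.Gamma (m + ν + 1))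
      ≤ x ^ (2 * m) / (2 * m).factorial := by
  have hΓ : 0 < Real.Gamma (m + ν + 1) := Real.Gamma_pos_of_pos (by linarith)
  have hpow : 0 ≤ (x / 2) ^ (2 * m) := (even_two_mul m).pow_nonneg _
  have hx : x ^ (2 * m) = 4 ^ m * (x / 2) ^ (2 * m) := by
    rw [pow_mul, pow_mul, ← mul_pow]
    ring
  rw [hx, div_le_div_iff₀ (by positivity) (by positivity)]
  calc Real.Gamma (1 + ν) * (x / 2) ^ (2 * m) * (2 * m).factorial
      = (x / 2) ^ (2 * m) * ((2 * m).factorial * Real.Gamma (1 + ν)) := by ring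
    _ ≤ (x / 2) ^ (2 * m) * (4 ^ m * (m.factorial * Real.Gamma (m + ν + 1))) := by
      gcongr ?_ * ?_
      exact factorial_two_mul_mul_Gamma_le hν m
    _ = 4 ^ m * (x / 2) ^ (2 * m) * (m.factorial * Real.Gamma (m + ν + 1)) := by ring

lemma summable_normalizedBesselI {ν : ℝ} (hν : -(1 / 2) ≤ ν) (x : ℝ) :
    Summable fun m : ℕ =>
      Real.Gamma (1 + ν) * (x / 2) ^ (2 * m) / (m.factorial * Real.Gamma (m + ν + 1)) :=
  (Real.hasSum_cosh x).summable.of_nonneg_of_le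
    (normalizedBesselI_term_nonneg (by linarith) x) (normalizedBesselI_term_le hν x)

lemma one_le_normalizedBesselI {ν : ℝ} (hν : -(1 / 2) ≤ ν) (x : ℝ) :
    1 ≤ normalizedBesselI ν x := by
  have hΓ : Real.Gamma (1 + ν) ≠ 0 := (Real.Gamma_pos_of_pos (by linarith)).ne'
  have hzeroth := (summable_normalizedBesselI hν x).le_tsum 0
    fun m _ => normalizedBesselI_term_nonneg (by linarith) x m
  simpa [normalizedBesselI, add_comm ν, hΓ] using hzeroth

lemma normalizedBesselI_le_cosh {ν : ℝ} (hν : -(1 / 2) ≤ ν) (x : ℝ) :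
    normalizedBesselI ν x ≤ Real.cosh x := by
  rw [Real.cosh_eq_tsum]
  exact (summable_normalizedBesselI hν x).tsum_le_tsum (normalizedBesselI_term_le hν x)
    (Real.hasSum_cosh x).summable

lemma measurable_normalizedBesselI {ν : ℝ} (hν : -(1 / 2) ≤ ν) :
    Measurable (normalizedBesselI ν) := by
  refine measurable_of_tendsto_metrizable (fun n => ?_) (tendsto_pi_nhds.2 fun x =>
    (summable_normalizedBesselI hν x).hasSum.tendsto_sum_nat)
  fun_prop

end Bessel

lemma abs_exp_neg_mul_sub_one_le {u x b r : ℝ} (hu : 0 ≤ u) (hx : 0 ≤ x) (hb : 0 ≤ b)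
    (hxu : x ≤ u + b) (hr : 1 ≤ r) (hrx : r ≤ Real.exp x) :
    |Real.exp (-u) * r - 1| ≤ Real.exp b * (u + x) := by
  have hb1 : 1 ≤ Real.exp b := Real.one_le_exp hb
  refine abs_le.2 ⟨?_, ?_⟩
  · have hexp : 1 - u ≤ Real.exp (-u) := Real.one_sub_le_exp_neg u
    calc -(Real.exp b * (u + x)) ≤ -(1 * (u + 0)) := by gcongr
      _ ≤ Real.exp (-u) * 1 - 1 := by linarith
      _ ≤ Real.exp (-u) * r - 1 := by gcongr
  · have hexp : 1 - Real.exp (-x) ≤ x := by linarith [Real.one_sub_le_exp_neg x]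
    calc Real.exp (-u) * r - 1 ≤ Real.exp (-u) * Real.exp x - Real.exp (-u) := by
          gcongr
          exact Real.exp_le_one_iff.2 (neg_nonpos.2 hu)
      _ = Real.exp (x - u) * (1 - Real.exp (-x)) := by
          rw [mul_sub, mul_one, ← Real.exp_add, ← Real.exp_add]
          ring_nf
      _ ≤ Real.exp b * (u + x) := by
          refine mul_le_mul ?_ (by linarith) (by linarith [Real.exp_le_one_iff.2 (neg_nonpos.2 hx)])
            (Real.exp_nonneg b)
          gcongr
          linarith

section CEV

/-- The CEV density `ζ_p` at time `t`, for volatility parameter `ξ`, initial value `y0` and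
elasticity `p > 1`. -/
noncomputable def cevDensity (t ξ y0 p z : ℝ) : ℝ :=
  √y0 * z ^ ((1 : ℝ) / 2 - 2 * p) / ((p - 1) * ξ ^ 2 * t)
    * Real.exp (-(z ^ (2 * (1 - p)) + y0 ^ (2 * (1 - p))) / (2 * ξ ^ 2 * t * (1 - p) ^ 2))
    * besselI (1 / (2 * (p - 1))) ((y0 * z) ^ (1 - p) / ((1 - p) ^ 2 * ξ ^ 2 * t))

/-- The coefficient of `z ^ (-(2 * p))` in the asymptotics of `cevDensity t ξ y0 p z` as `z → ∞`;
the constant `χ(τ, p)` of the expansion of call prices is `τ ^ (2 * p)` times this. -/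
noncomputable def cevTailCoeff (t ξ y0 p : ℝ) : ℝ :=
  Real.exp (-(y0 ^ (2 * (1 - p))) / (2 * ξ ^ 2 * t * (1 - p) ^ 2))
    / ((p - 1) * ξ ^ 2 * t * Real.Gamma (1 + 1 / (2 * (p - 1)))
      * (2 * (1 - p) ^ 2 * ξ ^ 2 * t) ^ (1 / (2 * (p - 1))))

/-- The natural scale `(1 - p)² ξ² t` of the variable `z ^ (2 * (1 - p))` in the CEV density. -/
noncomputable def cevScale (t ξ p : ℝ) : ℝ :=
  (1 - p) ^ 2 * ξ ^ 2 * t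

variable {t ξ y0 p : ℝ}

lemma cevScale_pos (ht : 0 < t) (hξ : 0 < ξ) (hp : 1 < p) : 0 < cevScale t ξ p := by
  have hp₁ : 0 < (1 - p) ^ 2 := sq_pos_of_neg (by linarith)
  unfold cevScale
  positivity

lemma neg_half_le_one_div_two_mul_sub_one (hp : 1 < p) : -(1 / 2) ≤ 1 / (2 * (p - 1)) := by
  have hη : 0 < 1 / (2 * (p - 1)) := one_div_pos.2 (by linarith)
  linarith

lemma cevTailCoeff_pos (ht : 0 < t) (hξ : 0 < ξ) (hp : 1 < p) : 0 < cevTailCoeff t ξ y0 p := by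
  have hp₁ : 0 < (1 - p) ^ 2 := sq_pos_of_neg (by linarith)
  unfold cevTailCoeff
  positivity

lemma rpow_two_mul_one_sub {x : ℝ} (hx : 0 ≤ x) (p : ℝ) :
    x ^ (2 * (1 - p)) = (x ^ (1 - p)) ^ 2 := by
  rw [← Real.rpow_mul_natCast hx, mul_comm]
  norm_num

lemma cevDensity_eq (ht : 0 < t) (hξ : 0 < ξ) (hy0 : 0 < y0) (hp : 1 < p) {z : ℝ} (hz : 0 < z) :
    cevDensity t ξ y0 p z = cevTailCoeff t ξ y0 p * z ^ (-(2 * p))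
      * (Real.exp (-(z ^ (2 * (1 - p)) / (2 * cevScale t ξ p)))
        * normalizedBesselI (1 / (2 * (p - 1))) ((y0 * z) ^ (1 - p) / cevScale t ξ p)) := by
  set c := cevScale t ξ p with hc_def
  set η := 1 / (2 * (p - 1)) with hη_def
  have hp₀ : 0 < p - 1 := sub_pos.2 hp
  have hc : 0 < c := cevScale_pos ht hξ hp
  have hη : 0 < η := by positivity
  have hηp : (1 - p) * η = -(1 / 2) := by
    rw [hη_def]
    field_simp
    ring
  have hleading : ((y0 * z) ^ (1 - p) / c / 2) ^ η =
      (√y0)⁻¹ * z ^ (-(1 / 2) : ℝ) / (2 * c) ^ η := by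
    rw [div_div, mul_comm c 2, Real.div_rpow (by positivity) (by positivity),
      ← Real.rpow_mul (by positivity), hηp, Real.mul_rpow hy0.le hz.le, Real.rpow_neg hy0.le,
      ← Real.sqrt_eq_rpow]
  have hpower : z ^ (-(2 * p)) = z ^ ((1 : ℝ) / 2 - 2 * p) * z ^ (-(1 / 2) : ℝ) := by
    rw [← Real.rpow_add hz]
    ring_nf
  have hexp : Real.exp (-(z ^ (2 * (1 - p)) + y0 ^ (2 * (1 - p))) / (2 * c)) =
      Real.exp (-(y0 ^ (2 * (1 - p))) / (2 * c)) * Real.exp (-(z ^ (2 * (1 - p)) / (2 * c))) := by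
    rw [← Real.exp_add]
    ring_nf
  rw [cevDensity, cevTailCoeff,
    show 2 * ξ ^ 2 * t * (1 - p) ^ 2 = 2 * c by rw [hc_def, cevScale]; ring,
    show 2 * (1 - p) ^ 2 * ξ ^ 2 * t = 2 * c by rw [hc_def, cevScale]; ring,
    ← cevScale, ← hc_def, ← hη_def,
    besselI_eq_mul_normalizedBesselI (by linarith) (by positivity), hleading, hpower, hexp]
  have hsqrt : √y0 ≠ 0 := (Real.sqrt_pos.2 hy0).ne'
  field_simp

lemma aestronglyMeasurable_cevDensity (ht : 0 < t) (hξ : 0 < ξ) (hy0 : 0 < y0) (hp : 1 < p) :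
    AEStronglyMeasurable (cevDensity t ξ y0 p) (volume.restrict (Ioi 0)) := by
  have hbessel := measurable_normalizedBesselI (neg_half_le_one_div_two_mul_sub_one hp)
  refine AEStronglyMeasurable.congr (Measurable.aestronglyMeasurable ?_)
    (ae_restrict_of_forall_mem measurableSet_Ioi fun z hz =>
      (cevDensity_eq ht hξ hy0 hp hz).symm)
  fun_prop

-- AM-GM, `2 (y0 z) ^ (1 - p) ≤ z ^ (2 (1 - p)) + y0 ^ (2 (1 - p))`, keeps the exponential growth of
-- the Bessel function under control down to `z = 0`.
lemma abs_cevDensity_sub_le (ht : 0 < t) (hξ : 0 < ξ) (hy0 : 0 < y0) (hp : 1 < p) {z : ℝ}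
    (hz : 0 < z) :
    |cevDensity t ξ y0 p z - cevTailCoeff t ξ y0 p * z ^ (-(2 * p))|
      ≤ cevTailCoeff t ξ y0 p * Real.exp (y0 ^ (2 * (1 - p)) / (2 * cevScale t ξ p))
        * (z ^ (-(4 * p - 2)) / (2 * cevScale t ξ p)
          + z ^ (-(3 * p - 1)) / (cevScale t ξ p * y0 ^ (p - 1))) := by
  set c := cevScale t ξ p
  set K := cevTailCoeff t ξ y0 p
  set u := z ^ (2 * (1 - p)) / (2 * c) with hu
  set x := (y0 * z) ^ (1 - p) / c with hx
  set b := y0 ^ (2 * (1 - p)) / (2 * c) with hb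
  set r := normalizedBesselI (1 / (2 * (p - 1))) x
  have hc : 0 < c := cevScale_pos ht hξ hp
  have hK : 0 < K := cevTailCoeff_pos ht hξ hp
  have hη := neg_half_le_one_div_two_mul_sub_one hp
  have hx0 : 0 ≤ x := by positivity
  have hxu : x ≤ u + b := by
    rw [hx, hu, hb, rpow_two_mul_one_sub hz.le, rpow_two_mul_one_sub hy0.le, ← add_div,
      Real.mul_rpow hy0.le hz.le, div_le_div_iff₀ hc (by positivity)]
    nlinarith [mul_le_mul_of_nonneg_left (two_mul_le_add_sq (y0 ^ (1 - p)) (z ^ (1 - p))) hc.le]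
  have hrx : r ≤ Real.exp x := (normalizedBesselI_le_cosh hη x).trans
    (by linarith [Real.cosh_add_sinh x, Real.sinh_nonneg_iff.2 hx0])
  have hzu : z ^ (-(2 * p)) * u = z ^ (-(4 * p - 2)) / (2 * c) := by
    rw [hu, ← mul_div_assoc, ← Real.rpow_add hz]
    ring_nf
  have hzx : z ^ (-(2 * p)) * x = z ^ (-(3 * p - 1)) / (c * y0 ^ (p - 1)) := by
    rw [show -(3 * p - 1) = -(2 * p) + (1 - p) by ring, Real.rpow_add hz, hx,
      Real.mul_rpow hy0.le hz.le, ← neg_sub p 1, Real.rpow_neg hy0.le]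
    field_simp
  calc |cevDensity t ξ y0 p z - K * z ^ (-(2 * p))|
      = K * z ^ (-(2 * p)) * |Real.exp (-u) * r - 1| := by
        rw [cevDensity_eq ht hξ hy0 hp hz, ← mul_sub_one, abs_mul, abs_of_pos (by positivity)]
    _ ≤ K * z ^ (-(2 * p)) * (Real.exp b * (u + x)) := by
        gcongr
        exact abs_exp_neg_mul_sub_one_le (by positivity) hx0 (by positivity) hxu
          (one_le_normalizedBesselI hη x) hrx
    _ = K * Real.exp b * (z ^ (-(4 * p - 2)) / (2 * c)
          + z ^ (-(3 * p - 1)) / (c * y0 ^ (p - 1))) := by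
        rw [← hzu, ← hzx]
        ring

lemma abs_integral_mul_cevDensity_sub_le (ht : 0 < t) (hξ : 0 < ξ) (hy0 : 0 < y0) (hp : 1 < p)
    {f : ℝ → ℝ} (hf : AEStronglyMeasurable f (volume.restrict (Ioi 0))) (hf0 : ∀ z > 0, 0 ≤ f z)
    (h₂ : IntegrableOn (fun z => f z * z ^ (-(2 * p))) (Ioi 0))
    (h₄ : IntegrableOn (fun z => f z * z ^ (-(4 * p - 2))) (Ioi 0))
    (h₃ : IntegrableOn (fun z => f z * z ^ (-(3 * p - 1))) (Ioi 0)) :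
    |(∫ z in Ioi 0, f z * cevDensity t ξ y0 p z)
        - cevTailCoeff t ξ y0 p * ∫ z in Ioi 0, f z * z ^ (-(2 * p))|
      ≤ cevTailCoeff t ξ y0 p * Real.exp (y0 ^ (2 * (1 - p)) / (2 * cevScale t ξ p))
        * ((∫ z in Ioi 0, f z * z ^ (-(4 * p - 2))) / (2 * cevScale t ξ p)
          + (∫ z in Ioi 0, f z * z ^ (-(3 * p - 1))) / (cevScale t ξ p * y0 ^ (p - 1))) := by
  rw [← integral_const_mul, ← integral_div, ← integral_div,
    ← integral_add (h₄.div_const _) (h₃.div_const _), ← integral_const_mul]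
  refine abs_integral_sub_integral_le (hf.mul (aestronglyMeasurable_cevDensity ht hξ hy0 hp))
    (h₂.const_mul _) (((h₄.div_const _).add (h₃.div_const _)).const_mul _)
    (ae_restrict_of_forall_mem measurableSet_Ioi fun z hz => ?_)
  rw [mul_left_comm, ← mul_sub, abs_mul, abs_of_nonneg (hf0 z hz)]
  refine (mul_le_mul_of_nonneg_left (abs_cevDensity_sub_le ht hξ hy0 hp hz) (hf0 z hz)).trans_eq ?_
  ring

end CEV

theorem stmt_7_general {t ξ y0 p k τ : ℝ} (ht : 0 < t) (hξ : 0 < ξ) (hy0 : 0 < y0) (hp : 1 < p)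
    (hk : 0 < k) (hτ : 0 < τ) :
    |(∫ y in Ioi (0 : ℝ), BS k y τ * cevDensity t ξ y0 p y) * τ
        / (τ ^ (2 * p) * cevTailCoeff t ξ y0 p * bsMoment k (2 * p)) - 1|
      ≤ Real.exp (y0 ^ (2 * (1 - p)) / (2 * cevScale t ξ p))
        * (bsMoment k (4 * p - 2) / (2 * cevScale t ξ p * bsMoment k (2 * p)) * τ ^ (2 * (p - 1))
          + bsMoment k (3 * p - 1) / (cevScale t ξ p * y0 ^ (p - 1) * bsMoment k (2 * p))
            * τ ^ (p - 1)) := by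
  have hintegrable {q : ℝ} (hq : 1 < q) := integrableOn_BS_mul_rpow_neg hk hτ hq
  have herror := abs_integral_mul_cevDensity_sub_le ht hξ hy0 hp
    (measurable_BS k τ).aestronglyMeasurable (fun y hy => (BS_pos k (mul_pos hy hτ)).le)
    (hintegrable (by linarith)) (hintegrable (by linarith)) (hintegrable (by linarith))
  simp only [integral_BS_mul_rpow_neg k _ hτ] at herror
  set C := ∫ y in Ioi 0, BS k y τ * cevDensity t ξ y0 p y
  set K := cevTailCoeff t ξ y0 p
  have hK : 0 < K := cevTailCoeff_pos ht hξ hp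
  have hJ : 0 < bsMoment k (2 * p) := bsMoment_pos hk (by linarith)
  have hleading : 0 < K * (τ ^ (2 * p - 1) * bsMoment k (2 * p)) := by positivity
  have hratio : C * τ / (τ ^ (2 * p) * K * bsMoment k (2 * p)) - 1 =
      (C - K * (τ ^ (2 * p - 1) * bsMoment k (2 * p)))
        / (K * (τ ^ (2 * p - 1) * bsMoment k (2 * p))) := by
    rw [Real.rpow_sub_one hτ.ne']
    field_simp
  rw [hratio, abs_div, abs_of_pos hleading, div_le_iff₀ hleading]
  refine herror.trans_eq ?_
  rw [show 4 * p - 2 - 1 = (2 * p - 1) + 2 * (p - 1) by ring, Real.rpow_add hτ,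
    show 3 * p - 1 - 1 = (2 * p - 1) + (p - 1) by ring, Real.rpow_add hτ]
  field_simp

theorem stmt_7 (t ξ y0 p : ℝ) (ht : 0 < t) (hξ : 0 < ξ) (hy0 : 0 < y0) (hp : 1 < p)
    (k : ℝ) (hk : 0 < k) (τ : ℝ) (hτ : τ ∈ Set.Ioo (0 : ℝ) 1) :
    let η : ℝ := 1 / (2 * (p - 1))
    -- the CEV density (case `p > 1`)
    let ζ : ℝ → ℝ := fun z =>
      Real.sqrt y0 * z ^ ((1 : ℝ) / 2 - 2 * p) / ((p - 1) * ξ ^ 2 * t)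
        * Real.exp (-(z ^ (2 * (1 - p)) + y0 ^ (2 * (1 - p))) / (2 * ξ ^ 2 * t * (1 - p) ^ 2))
        * besselI η ((y0 * z) ^ (1 - p) / ((1 - p) ^ 2 * ξ ^ 2 * t))
    let χ : ℝ := τ ^ (2 * p) * Real.exp (-(y0 ^ (2 * (1 - p))) / (2 * ξ ^ 2 * t * (1 - p) ^ 2))
        / ((p - 1) * ξ ^ 2 * t * Real.Gamma (1 + η) * (2 * (1 - p) ^ 2 * ξ ^ 2 * t) ^ η)
    -- the call price
    let C : ℝ := ∫ y in Set.Ioi (0 : ℝ), BS k y τ * ζ y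
    -- the maturity-independent integrals `J^q(k)`
    let J : ℝ → ℝ := fun q => ∫ y in Set.Ioi (0 : ℝ), BS k y 1 * y ^ (-q)
    |C * τ / (χ * J (2 * p)) - 1|
      ≤ Real.exp (y0 ^ (2 - 2 * p) / (2 * (p - 1) ^ 2 * t * ξ ^ 2))
        * (J (4 * p - 2) / (2 * ξ ^ 2 * t * (1 - p) ^ 2 * J (2 * p))
          + J (3 * p - 1) / (ξ ^ 2 * t * (1 - p) ^ 2 * y0 ^ (p - 1) * J (2 * p)))
        * τ ^ (p - 1) := by
  intro η ζ χ C J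
  have hscale : ξ ^ 2 * t * (1 - p) ^ 2 = cevScale t ξ p := by
    rw [cevScale]
    ring
  have hχ : χ = τ ^ (2 * p) * cevTailCoeff t ξ y0 p := mul_div_assoc _ _ _
  have hJ {q : ℝ} (hq : 1 < q) : 0 < J q := bsMoment_pos hk hq
  have hc : 0 < cevScale t ξ p := cevScale_pos ht hξ hp
  have hJ₂ := hJ (q := 2 * p) (by linarith)
  have hJ₄ := hJ (q := 4 * p - 2) (by linarith)
  have hτ_pow : τ ^ (2 * (p - 1)) ≤ τ ^ (p - 1) :=
    Real.rpow_le_rpow_of_exponent_ge hτ.1 hτ.2.le (by linarith)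
  rw [hχ, show 2 * ξ ^ 2 * t * (1 - p) ^ 2 = 2 * cevScale t ξ p by rw [← hscale]; ring, hscale,
    show 2 * (p - 1) ^ 2 * t * ξ ^ 2 = 2 * cevScale t ξ p by rw [← hscale]; ring,
    show 2 - 2 * p = 2 * (1 - p) by ring, mul_assoc (Real.exp _), add_mul]
  refine (stmt_7_general ht hξ hy0 hp hk hτ.1).trans ?_
  change Real.exp _ * (J (4 * p - 2) / (_ * J (2 * p)) * _
    + J (3 * p - 1) / (_ * J (2 * p)) * _) ≤ _
  gcongr
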